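/- arXiv:math/0404468 — 3 statements merged into one kernel-verified Lean document; each statement's English description precedes it below -/
import Mathlib

section
/- Let Γ be a finite abelian group, and let S ⊆ Γ be closed under inversion. For a finite multigraph G with a fixed orientation of its edges, let f(G) be the number of S-flows of G. Let Γ* be the character group of Γ, and let H be the weighted graph on vertex set Γ* with node weights α_χ = 1/|Γ| for every χ ∈ Γ* and edge weights β_{χ,χ'} = Σ_{s∈S} χ(s)^{-1} χ'(s). Then β is real and symmetric, and f(G) = hom(G,H) for every finite multigraph G. -/
/-- A finite multigraph with a fixed orientation of its edges (parallel edges allowed,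
no loops): each edge has a source and a target. -/
structure OrientedMultigraph where
  n : ℕ
  m : ℕ
  src : Fin m → Fin n
  tgt : Fin m → Fin n
  noLoops : ∀ e, src e ≠ tgt e

/-- An `S`-flow of an oriented multigraph `G`: an assignment of an element of `S` to each
edge such that at every vertex the product of the values on entering edges equals the
product of the values on leaving edges. -/
def IsFlow (Γ : Type) [CommGroup Γ] (S : Finset Γ) (G : OrientedMultigraph)
    (φ : Fin G.m → Γ) : Prop :=
  (∀ e, φ e ∈ S) ∧
  ∀ v : Fin G.n,
    (∏ e ∈ Finset.univ.filter (fun e => G.tgt e = v), φ e) =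
    (∏ e ∈ Finset.univ.filter (fun e => G.src e = v), φ e)

/-- The number of `S`-flows of `G`. -/
noncomputable def flowCount (Γ : Type) [CommGroup Γ] (S : Finset Γ)
    (G : OrientedMultigraph) : ℕ :=
  Set.ncard {φ : Fin G.m → Γ | IsFlow Γ S G φ}

/-- The edge weight `β_{χ,χ'} = ∑_{s ∈ S} χ(s)⁻¹ χ'(s)` of the target graph, a priori a
complex number. -/
noncomputable def charWeight (Γ : Type) [CommGroup Γ] (S : Finset Γ) (χ χ' : Γ →* ℂˣ) : ℂ :=
  ∑ s ∈ S, (((χ s)⁻¹ * χ' s : ℂˣ) : ℂ)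

/-- The homomorphism function `hom(G, H)` for the weighted graph `H` on the character
group `Γ* = Hom(Γ, ℂˣ)`, with all node weights `1/|Γ|` and edge weights `β_{χ,χ'}`. -/
noncomputable def homFlowTarget (Γ : Type) [CommGroup Γ] [Fintype Γ]
    [Fintype (Γ →* ℂˣ)] (S : Finset Γ) (G : OrientedMultigraph) : ℂ :=
  ∑ ψ : Fin G.n → (Γ →* ℂˣ),
    (∏ _v : Fin G.n, (1 / (Fintype.card Γ : ℂ))) *
    ∏ e : Fin G.m, charWeight Γ S (ψ (G.src e)) (ψ (G.tgt e))

theorem flow_aux_orth (Γ : Type) [CommGroup Γ] [Fintype Γ] [Fintype (Γ →* ℂˣ)]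
    [DecidableEq Γ] (a : Γ) :
    ∑ χ : Γ →* ℂˣ, (1 / (Fintype.card Γ : ℂ)) * ((χ a : ℂˣ) : ℂ) = if a = 1 then 1 else 0 := by
  have hN : (Fintype.card Γ : ℂ) ≠ 0 := Nat.cast_ne_zero.2 Fintype.card_ne_zero
  rw [← Finset.mul_sum]
  split_ifs with h
  · subst h
    have hc : Fintype.card (Γ →* ℂˣ) = Fintype.card Γ := by
      have := CommGroup.card_monoidHom_of_hasEnoughRootsOfUnity Γ ℂ
      simpa [Nat.card_eq_fintype_card] using this
    simp [hc, hN]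
  · obtain ⟨χ₀, h₀⟩ := CommGroup.exists_apply_ne_one_of_hasEnoughRootsOfUnity Γ ℂ h
    have key : ((χ₀ a : ℂˣ) : ℂ) * ∑ χ : Γ →* ℂˣ, ((χ a : ℂˣ) : ℂ)
        = ∑ χ : Γ →* ℂˣ, ((χ a : ℂˣ) : ℂ) := by
      rw [Finset.mul_sum]
      exact Fintype.sum_equiv (Equiv.mulLeft χ₀) _ _ (fun χ => by simp)
    have h1 : ((χ₀ a : ℂˣ) : ℂ) ≠ 1 := fun h => h₀ (Units.ext h)
    have : ∑ χ : Γ →* ℂˣ, ((χ a : ℂˣ) : ℂ) = 0 := by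
      by_contra hne
      exact h1 (mul_right_cancel₀ hne (by rw [key, one_mul]))
    simp [this]

theorem flow_aux_conj (Γ : Type) [CommGroup Γ] [Fintype Γ] (χ : Γ →* ℂˣ) (a : Γ) :
    (starRingEnd ℂ) ((χ a : ℂˣ) : ℂ) = (((χ a)⁻¹ : ℂˣ) : ℂ) := by
  have h : ‖((χ a : ℂˣ) : ℂ)‖ = 1 := by
    apply Complex.norm_eq_one_of_pow_eq_one (n := Fintype.card Γ) _ Fintype.card_ne_zero
    rw [← Units.val_pow_eq_pow_val, ← map_pow, pow_card_eq_one]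
    simp
  rw [Units.val_inv_eq_inv_val, Complex.inv_eq_conj h]

theorem flow_aux_symm (Γ : Type) [CommGroup Γ] (S : Finset Γ) (hS : ∀ s ∈ S, s⁻¹ ∈ S)
    (χ χ' : Γ →* ℂˣ) : charWeight Γ S χ χ' = charWeight Γ S χ' χ := by
  unfold charWeight
  refine Finset.sum_bij' (fun s _ => s⁻¹) (fun s _ => s⁻¹) hS hS (by simp) (by simp) ?_
  intro s _
  simp [mul_comm]

theorem flow_aux_edges (Γ : Type) [CommGroup Γ] (G : OrientedMultigraph)
    (ψ : Fin G.n → (Γ →* ℂˣ)) (φ : Fin G.m → Γ) :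
    ∏ e, ((ψ (G.src e) (φ e))⁻¹ * ψ (G.tgt e) (φ e)) =
    ∏ v, ψ v ((∏ e ∈ Finset.univ.filter (fun e => G.tgt e = v), φ e) /
      (∏ e ∈ Finset.univ.filter (fun e => G.src e = v), φ e)) := by
  simp only [map_div, map_prod, Finset.prod_div_distrib, Finset.prod_mul_distrib,
    Finset.prod_inv_distrib]
  have h : ∀ f : Fin G.m → Fin G.n,
      ∏ v, ∏ e ∈ Finset.univ.filter (fun e => f e = v), ψ v (φ e) = ∏ e, ψ (f e) (φ e) := by
    intro f
    rw [← Finset.prod_fiberwise Finset.univ f (fun e => ψ (f e) (φ e))]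
    refine Finset.prod_congr rfl fun v _ => Finset.prod_congr rfl fun e he => ?_
    rw [(Finset.mem_filter.1 he).2]
  rw [h, h, div_eq_mul_inv, mul_comm]

/-- Let `Γ` be a finite abelian group and `S ⊆ Γ` closed under inversion. Then the edge
weights `β_{χ,χ'} = ∑_{s ∈ S} χ(s)⁻¹ χ'(s)` on the character group `Γ*` are real and
symmetric, and the number of `S`-flows of any finite multigraph `G` (with any fixed
orientation) equals `hom(G, H)` for the weighted graph `H` on `Γ*` with node weights
`1/|Γ|` and edge weights `β`. -/
theorem flowCount_eq_hom (Γ : Type) [CommGroup Γ] [Fintype Γ] [Fintype (Γ →* ℂˣ)]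
    (S : Finset Γ) (hS : ∀ s ∈ S, s⁻¹ ∈ S) :
    (∀ χ χ' : Γ →* ℂˣ,
      (charWeight Γ S χ χ').im = 0 ∧ charWeight Γ S χ χ' = charWeight Γ S χ' χ) ∧
    (∀ G : OrientedMultigraph, (flowCount Γ S G : ℂ) = homFlowTarget Γ S G) := by
  classical
  refine ⟨fun χ χ' => ⟨?_, flow_aux_symm Γ S hS χ χ'⟩, fun G => ?_⟩
  · rw [← Complex.conj_eq_iff_im]
    conv_rhs => rw [flow_aux_symm Γ S hS χ χ']
    unfold charWeight
    rw [map_sum]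
    refine Finset.sum_congr rfl fun s _ => ?_
    rw [Units.val_mul, map_mul, flow_aux_conj, ← map_inv, flow_aux_conj, map_inv, inv_inv,
      Units.val_mul, mul_comm]
  · unfold homFlowTarget charWeight
    simp only [Finset.prod_univ_sum, Finset.mul_sum]
    rw [Finset.sum_comm]
    have key : ∀ φ : Fin G.m → Γ,
        ∑ ψ : Fin G.n → (Γ →* ℂˣ), (∏ _v : Fin G.n, (1 / (Fintype.card Γ : ℂ))) *
          ∏ e : Fin G.m, (((ψ (G.src e) (φ e))⁻¹ * ψ (G.tgt e) (φ e) : ℂˣ) : ℂ) =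
        if (∀ v : Fin G.n, (∏ e ∈ Finset.univ.filter (fun e => G.tgt e = v), φ e) =
          (∏ e ∈ Finset.univ.filter (fun e => G.src e = v), φ e)) then 1 else 0 := by
      intro φ
      simp only [← Units.coe_prod, flow_aux_edges]
      simp only [Units.coe_prod, ← Finset.prod_mul_distrib]
      rw [← Fintype.piFinset_univ, ← Finset.prod_univ_sum (fun _ => Finset.univ)
        (fun v (χ : Γ →* ℂˣ) => (1 / (Fintype.card Γ : ℂ)) *
          ((χ ((∏ e ∈ Finset.univ.filter (fun e => G.tgt e = v), φ e) /
            (∏ e ∈ Finset.univ.filter (fun e => G.src e = v), φ e)) : ℂˣ) : ℂ))]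
      simp only [flow_aux_orth, div_eq_one]
      rw [Finset.prod_ite_zero]
      simp
    rw [Finset.sum_congr rfl (fun φ _ => key φ), Finset.sum_boole]
    unfold flowCount
    rw [← Set.ncard_coe_finset]
    congr 2
    ext φ
    simp [IsFlow, Fintype.mem_piFinset]
end

section
/- On the class of finite multigraphs in which loops are allowed, define f(G) = 2^{number of loops of G}. Then for every k ≥ 0 the connection matrix M(f,k) is positive semidefinite and has rank 1, yet there is no weighted graph H such that f(G) = hom(G,H) for all G (where loops of G may be mapped onto loops of H, each loop of H carrying a single edge weight). -/
/-- A finite multigraph in which both parallel edges and loops are allowed: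
vertices `Fin n`, edges indexed by `Fin m`, each edge an unordered pair of vertices. -/
structure LoopedMultigraph where
  n : ℕ
  m : ℕ
  ends : Fin m → Sym2 (Fin n)

/-- A weighted graph: finite vertex set, positive real node weights,
real symmetric edge weights (including loop weights `β i i`). -/
structure WeightedGraph where
  d : ℕ
  α : Fin d → ℝ
  β : Fin d → Fin d → ℝ
  α_pos : ∀ i, 0 < α i
  β_symm : ∀ i j, β i j = β j i

/-- The weighted number of homomorphisms `hom(G, H)`; a loop at `u` contributes the
factor `β_H(φ(u), φ(u))`. -/
noncomputable def homCount (G : LoopedMultigraph) (H : WeightedGraph) : ℝ :=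
  ∑ φ : Fin G.n → Fin H.d,
    (∏ u, H.α (φ u)) *
    (∏ e, Sym2.lift ⟨fun u v => H.β (φ u) (φ v), fun u v => H.β_symm (φ u) (φ v)⟩ (G.ends e))

/-- A `k`-labeled looped multigraph: the first `k` vertices are labeled `1, …, k`. -/
structure LGraph (k : ℕ) extends LoopedMultigraph where
  hk : k ≤ n

namespace LGraph

variable {k : ℕ}

/-- Inclusion of the vertices of the first factor into the vertex set of the product. -/
def leftMap (A B : LGraph k) : Fin A.n → Fin (A.n + (B.n - k)) :=
  fun v => ⟨(v : ℕ), Nat.lt_of_lt_of_le v.isLt (Nat.le_add_right _ _)⟩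

/-- Inclusion of the vertices of the second factor into the vertex set of the product. -/
def rightMap (A B : LGraph k) : Fin B.n → Fin (A.n + (B.n - k)) :=
  fun v =>
    if h : (v : ℕ) < k then ⟨(v : ℕ), by have h1 := A.hk; omega⟩
    else ⟨A.n + ((v : ℕ) - k), by have h1 := B.hk; have h2 := v.isLt; omega⟩

/-- The product (gluing) of two `k`-labeled graphs: take the disjoint union and identify
vertices with the same label. -/
def glue (A B : LGraph k) : LGraph k where
  n := A.n + (B.n - k)
  m := A.m + B.m
  ends := fun e =>
    if h : (e : ℕ) < A.m then
      Sym2.map (leftMap A B) (A.ends ⟨(e : ℕ), h⟩)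
    else
      Sym2.map (rightMap A B) (B.ends ⟨(e : ℕ) - A.m, by have := e.isLt; omega⟩)
  hk := Nat.le_trans A.hk (Nat.le_add_right _ _)

end LGraph

/-- The entry of the connection matrix `M(f,k)` in row `A` and column `B`. -/
def connEntry (f : LoopedMultigraph → ℝ) {k : ℕ} (A B : LGraph k) : ℝ :=
  f (LGraph.glue A B).toLoopedMultigraph

/-- The rank of the connection matrix `M(f,k)`. -/
noncomputable def connRank (f : LoopedMultigraph → ℝ) (k : ℕ) : Cardinal :=
  Module.rank ℝ ↥(Submodule.span ℝ (Set.range (fun A : LGraph k => connEntry f A)))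

/-- Positive semidefiniteness of the (infinite) connection matrix `M(f,k)`. -/
def ConnPSD (f : LoopedMultigraph → ℝ) (k : ℕ) : Prop :=
  ∀ x : LGraph k →₀ ℝ,
    0 ≤ ∑ A ∈ x.support, ∑ B ∈ x.support, x A * x B * connEntry f A B

/-- The number of loops of `G`. -/
noncomputable def loopCount (G : LoopedMultigraph) : ℕ :=
  Set.ncard {e : Fin G.m | (G.ends e).IsDiag}

/-- The graph parameter `f(G) = 2 ^ (number of loops of G)`. -/
noncomputable def twoPowLoops (G : LoopedMultigraph) : ℝ :=
  (2 : ℝ) ^ loopCount G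

theorem loopCount_eq_sum (G : LoopedMultigraph) [DecidablePred fun e : Fin G.m => (G.ends e).IsDiag] :
    loopCount G = ∑ e : Fin G.m, if (G.ends e).IsDiag then 1 else 0 := by
  rw [loopCount, Set.ncard_eq_toFinset_card']
  simp

theorem leftMap_inj {k : ℕ} (A B : LGraph k) : Function.Injective (LGraph.leftMap A B) := by
  intro u v h
  simp only [LGraph.leftMap, Fin.mk.injEq] at h
  exact Fin.ext h

theorem rightMap_inj {k : ℕ} (A B : LGraph k) : Function.Injective (LGraph.rightMap A B) := by
  intro u v h
  have hA := A.hk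
  apply Fin.ext
  unfold LGraph.rightMap at h
  split_ifs at h <;> simp only [Fin.mk.injEq] at h <;> omega

theorem loopCount_glue {k : ℕ} (A B : LGraph k) :
    loopCount (LGraph.glue A B).toLoopedMultigraph =
      loopCount A.toLoopedMultigraph + loopCount B.toLoopedMultigraph := by
  classical
  rw [loopCount_eq_sum, loopCount_eq_sum, loopCount_eq_sum]
  change (∑ e : Fin (A.m + B.m), _) = _
  rw [Fin.sum_univ_add]
  congr 1
  · refine Finset.sum_congr rfl fun e _ => ?_
    have h : (LGraph.glue A B).ends (Fin.castAdd B.m e) =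
        Sym2.map (LGraph.leftMap A B) (A.ends e) := by
      simp [LGraph.glue]
    have h2 : ((LGraph.glue A B).ends (Fin.castAdd B.m e)).IsDiag ↔ (A.ends e).IsDiag := by
      rw [h]
      exact Sym2.isDiag_map (leftMap_inj A B)
    exact if_congr h2 rfl rfl
  · refine Finset.sum_congr rfl fun e _ => ?_
    have h : (LGraph.glue A B).ends (Fin.natAdd A.m e) =
        Sym2.map (LGraph.rightMap A B) (B.ends e) := by
      simp [LGraph.glue]
    have h2 : ((LGraph.glue A B).ends (Fin.natAdd A.m e)).IsDiag ↔ (B.ends e).IsDiag := by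
      rw [h]
      exact Sym2.isDiag_map (rightMap_inj A B)
    exact if_congr h2 rfl rfl

theorem connEntry_eq {k : ℕ} (A B : LGraph k) :
    connEntry twoPowLoops A B =
      twoPowLoops A.toLoopedMultigraph * twoPowLoops B.toLoopedMultigraph := by
  simp only [connEntry, twoPowLoops, loopCount_glue, pow_add]

theorem connPSD_two (k : ℕ) : ConnPSD twoPowLoops k := by
  intro x
  have h : ∑ A ∈ x.support, ∑ B ∈ x.support, x A * x B * connEntry twoPowLoops A B =
      (∑ A ∈ x.support, x A * twoPowLoops A.toLoopedMultigraph) ^ 2 := by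
    rw [sq, Finset.sum_mul_sum]
    refine Finset.sum_congr rfl fun A _ => Finset.sum_congr rfl fun B _ => ?_
    rw [connEntry_eq]; ring
  rw [h]
  positivity

theorem twoPowLoops_ne (G : LoopedMultigraph) : twoPowLoops G ≠ 0 := by
  simp [twoPowLoops]

theorem connRank_two (k : ℕ) : connRank twoPowLoops k = 1 := by
  let E : LGraph k := ⟨⟨k, 0, Fin.elim0⟩, le_rfl⟩
  let v : LGraph k → ℝ := fun B => twoPowLoops B.toLoopedMultigraph
  have hrow : ∀ A : LGraph k, connEntry twoPowLoops A = twoPowLoops A.toLoopedMultigraph • v := by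
    intro A; funext B; simp [connEntry_eq, v]
  have hspan : Submodule.span ℝ (Set.range (fun A : LGraph k => connEntry twoPowLoops A)) =
      Submodule.span ℝ {v} := by
    apply le_antisymm
    · rw [Submodule.span_le]
      rintro _ ⟨A, rfl⟩
      simp only [hrow]
      exact Submodule.smul_mem _ _ (Submodule.mem_span_singleton_self v)
    · rw [Submodule.span_le, Set.singleton_subset_iff]
      have h : v = (twoPowLoops E.toLoopedMultigraph)⁻¹ • connEntry twoPowLoops E := by
        rw [hrow, smul_smul, inv_mul_cancel₀ (twoPowLoops_ne _), one_smul]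
      rw [h]
      exact Submodule.smul_mem _ _ (Submodule.subset_span ⟨E, rfl⟩)
  have hv : v ≠ 0 := fun h => twoPowLoops_ne E.toLoopedMultigraph (congrFun h E)
  rw [connRank, hspan, ← Module.finrank_eq_rank, finrank_span_singleton hv, Nat.cast_one]

/-- Two vertices joined by `m` parallel edges. -/
def parGraph (m : ℕ) : LoopedMultigraph := ⟨2, m, fun _ => s(0, 1)⟩

/-- One vertex with `m` loops. -/
def bouquet (m : ℕ) : LoopedMultigraph := ⟨1, m, fun _ => s(0, 0)⟩

theorem two_parGraph (m : ℕ) : twoPowLoops (parGraph m) = 1 := by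
  simp [twoPowLoops, loopCount, parGraph]

theorem two_bouquet (m : ℕ) : twoPowLoops (bouquet m) = 2 ^ m := by
  simp [twoPowLoops, loopCount, bouquet]

theorem hom_parGraph (m : ℕ) (H : WeightedGraph) :
    homCount (parGraph m) H = ∑ p : Fin H.d × Fin H.d, H.α p.1 * H.α p.2 * H.β p.1 p.2 ^ m := by
  rw [← (finTwoArrowEquiv (Fin H.d)).sum_comp]
  change (∑ φ : Fin 2 → Fin H.d, (∏ u : Fin 2, H.α (φ u)) *
    ∏ e : Fin m, H.β (φ 0) (φ 1)) = _
  simp [Fin.prod_univ_two]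

theorem hom_bouquet (m : ℕ) (H : WeightedGraph) :
    homCount (bouquet m) H = ∑ i : Fin H.d, H.α i * H.β i i ^ m := by
  rw [← (Equiv.funUnique (Fin 1) (Fin H.d)).sum_comp]
  change (∑ φ : Fin 1 → Fin H.d, (∏ u : Fin 1, H.α (φ u)) *
    ∏ e : Fin m, H.β (φ 0) (φ 0)) = _
  simp

theorem not_hom_two :
    ¬ ∃ H : WeightedGraph, ∀ G : LoopedMultigraph, twoPowLoops G = homCount G H := by
  rintro ⟨H, h⟩
  have hp := fun m => (hom_parGraph m H).symm.trans ((h _).symm.trans (two_parGraph m))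
  have hb := fun m => (hom_bouquet m H).symm.trans ((h _).symm.trans (two_bouquet m))
  have hz : ∑ p : Fin H.d × Fin H.d, H.α p.1 * H.α p.2 * (H.β p.1 p.2 - 1) ^ 2 = 0 := by
    have e : ∑ p : Fin H.d × Fin H.d, H.α p.1 * H.α p.2 * (H.β p.1 p.2 - 1) ^ 2 =
        (∑ p : Fin H.d × Fin H.d, H.α p.1 * H.α p.2 * H.β p.1 p.2 ^ 2) -
        2 * (∑ p : Fin H.d × Fin H.d, H.α p.1 * H.α p.2 * H.β p.1 p.2 ^ 1) +
        ∑ p : Fin H.d × Fin H.d, H.α p.1 * H.α p.2 * H.β p.1 p.2 ^ 0 := by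
      rw [Finset.mul_sum, ← Finset.sum_sub_distrib, ← Finset.sum_add_distrib]
      exact Finset.sum_congr rfl fun p _ => by ring
    rw [e, hp, hp, hp]; norm_num
  rw [Finset.sum_eq_zero_iff_of_nonneg (fun p _ =>
    mul_nonneg (mul_pos (H.α_pos _) (H.α_pos _)).le (sq_nonneg _))] at hz
  have hβ : ∀ i, H.β i i = 1 := by
    intro i
    have := hz (i, i) (Finset.mem_univ _)
    have hne := (H.α_pos i).ne'
    simp only [mul_eq_zero, hne, false_or, pow_eq_zero_iff, ne_eq, OfNat.ofNat_ne_zero,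
      not_false_eq_true] at this
    linarith
  have h0 := hb 0
  have h1 := hb 1
  simp only [hβ, one_pow] at h0 h1
  rw [h0] at h1
  norm_num at h1

/-- On multigraphs with loops allowed, the parameter `f(G) = 2^{#loops}` has positive
semidefinite connection matrices of rank `1` for every `k`, yet it is not the
homomorphism function of any weighted graph. -/
theorem twoPowLoops_psd_rank_one_not_hom :
    (∀ k : ℕ, ConnPSD twoPowLoops k ∧ connRank twoPowLoops k = 1) ∧
    ¬ ∃ H : WeightedGraph, ∀ G : LoopedMultigraph, twoPowLoops G = homCount G H := by
  exact ⟨fun k => ⟨connPSD_two k, connRank_two k⟩, not_hom_two⟩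
end

section
/- Let A be a finite-dimensional commutative associative real algebra equipped with a linear functional f: A → ℝ such that ⟨x,y⟩ = f(xy) is a positive definite inner product on A. Then A has a uniquely determined basis {p₁,…,p_r} consisting of nonzero idempotents (p_i² = p_i) that are pairwise annihilating (p_i p_j = 0 for i ≠ j), and if A has a unit u, then u = p₁ + ⋯ + p_r. -/
section IdemAux

variable {A : Type} [NonUnitalCommRing A] [Module ℝ A]
    [SMulCommClass ℝ A A] [IsScalarTower ℝ A A]

/-- Multiplication operators are simultaneously diagonalizable. -/
theorem idemAux_diag [FiniteDimensional ℝ A]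
    (f : A →ₗ[ℝ] ℝ) (hpos : ∀ x : A, x ≠ 0 → 0 < f (x * x)) :
    ⨆ χ : A → ℝ, ⨅ a, Module.End.eigenspace (LinearMap.mulLeft ℝ a : A →ₗ[ℝ] A) (χ a) = ⊤ := by
  let cd : InnerProductSpace.Core ℝ A :=
    { inner := fun x y => f (x * y)
      conj_inner_symm := fun x y => by simp [mul_comm]
      re_inner_nonneg := fun x => by
        by_cases hx : x = 0
        · simp [hx]
        · simpa using (hpos x hx).le
      add_left := fun x y z => by simp [add_mul]
      smul_left := fun x y r => by simp [smul_mul_assoc]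
      definite := fun x hx => by
        by_contra h
        exact (hpos x h).ne' hx }
  letI : NormedAddCommGroup A := cd.toNormedAddCommGroup
  letI : InnerProductSpace ℝ A := InnerProductSpace.ofCore cd.toCore
  refine LinearMap.IsSymmetric.iSup_iInf_eq_top_of_commute (𝕜 := ℝ)
    (T := fun a : A => (LinearMap.mulLeft ℝ a : A →ₗ[ℝ] A)) ?_ ?_
  · intro a x y
    change f (a * x * y) = f (x * (a * y))
    congr 1
    rw [mul_comm a x, mul_assoc]
  · intro a b _
    ext x
    change a * (b * x) = b * (a * x)
    exact mul_left_comm a b x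

/-- The idempotents spanning one-dimensional ideals. -/
def idemAuxSet (A : Type) [NonUnitalCommRing A] [Module ℝ A] : Set A :=
  {p | p * p = p ∧ p ≠ 0 ∧ ∀ a : A, ∃ c : ℝ, a * p = c • p}

theorem idemAux_span [FiniteDimensional ℝ A]
    (f : A →ₗ[ℝ] ℝ) (hpos : ∀ x : A, x ≠ 0 → 0 < f (x * x)) :
    Submodule.span ℝ (idemAuxSet A) = ⊤ := by
  rw [eq_top_iff, ← idemAux_diag f hpos]
  refine iSup_le fun χ v hv => ?_
  by_cases hv0 : v = 0
  · rw [hv0]; exact Submodule.zero_mem _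
  have hm : ∀ a, a * v = χ a • v := fun a => by
    have := (Submodule.mem_iInf _).1 hv a
    rw [Module.End.mem_eigenspace_iff] at this
    exact this
  have hc : χ v ≠ 0 := by
    intro h
    have h1 := hpos v hv0
    rw [hm v, h] at h1
    simp at h1
  have hmem : (χ v)⁻¹ • v ∈ idemAuxSet A := by
    refine ⟨?_, smul_ne_zero (inv_ne_zero hc) hv0, fun a => ⟨χ a, ?_⟩⟩
    · rw [smul_mul_smul_comm, hm v, smul_smul]
      congr 1
      field_simp
    · rw [mul_smul_comm, hm a, smul_comm]
  have : v = χ v • ((χ v)⁻¹ • v) := by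
    rw [smul_smul, mul_inv_cancel₀ hc, one_smul]
  rw [this]
  exact Submodule.smul_mem _ _ (Submodule.subset_span hmem)

theorem idemAux_orth {p q : A} (hp : p ∈ idemAuxSet A) (hq : q ∈ idemAuxSet A) (hpq : p ≠ q) :
    p * q = 0 := by
  by_contra h
  obtain ⟨hp1, hp0, hp2⟩ := hp
  obtain ⟨hq1, hq0, hq2⟩ := hq
  obtain ⟨c, hc⟩ := hp2 q
  obtain ⟨d, hd⟩ := hq2 p
  have e1 : p * q = p * q * q := by rw [mul_assoc, hq1]
  have e2 : p * q = p * (p * q) := by rw [← mul_assoc, hp1]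
  have hd0 : d ≠ 0 := by rintro rfl; simp [hd] at h
  have hc0 : c ≠ 0 := by rintro rfl; rw [mul_comm] at hc; simp [hc] at h
  have hd1 : d = 1 := by
    rw [hd, mul_smul_comm, hd, smul_smul] at e2
    have := smul_left_injective ℝ hq0 e2
    field_simp at this
    exact this.symm
  have hc1 : c = 1 := by
    rw [mul_comm p q, hc, smul_mul_assoc, mul_comm p q, hc, smul_smul] at e1
    have := smul_left_injective ℝ hp0 e1
    field_simp at this
    exact this.symm
  apply hpq
  rw [hd1, one_smul] at hd
  rw [hc1, one_smul, mul_comm] at hc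
  exact hc.symm.trans hd

theorem idemAux_linInd : LinearIndependent ℝ (Subtype.val : idemAuxSet A → A) := by
  rw [linearIndependent_iff']
  intro s g hg i hi
  have h := congrArg (fun x => x * i.1) hg
  simp only [Finset.sum_mul, zero_mul] at h
  rw [Finset.sum_eq_single i] at h
  · rw [smul_mul_assoc, i.2.1] at h
    exact (smul_eq_zero.1 h).resolve_right i.2.2.1
  · intro j _ hj
    rw [smul_mul_assoc, idemAux_orth j.2 i.2 (fun e => hj (Subtype.ext e)), smul_zero]
  · intro h; exact absurd hi h

end IdemAux

/-- Let `A` be a finite-dimensional commutative associative real algebra (not assumed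
unital) equipped with a linear functional `f : A → ℝ` such that `⟨x, y⟩ = f(xy)` is a
positive definite inner product on `A`. Then `A` has a uniquely determined basis
`{p₁, …, p_r}` consisting of nonzero idempotents that pairwise annihilate each other;
moreover, if `A` has a unit `u`, then `u = p₁ + ⋯ + p_r`. -/
theorem exists_unique_idempotent_basis
    (A : Type) [NonUnitalCommRing A] [Module ℝ A]
    [SMulCommClass ℝ A A] [IsScalarTower ℝ A A] [FiniteDimensional ℝ A]
    (f : A →ₗ[ℝ] ℝ) (hpos : ∀ x : A, x ≠ 0 → 0 < f (x * x)) :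
    ∃ P : Finset A,
      ((∀ p ∈ P, p * p = p ∧ p ≠ 0) ∧
        (∀ p ∈ P, ∀ q ∈ P, p ≠ q → p * q = 0) ∧
        LinearIndependent ℝ (Subtype.val : {x // x ∈ P} → A) ∧
        Submodule.span ℝ (P : Set A) = ⊤ ∧
        P.card = Module.finrank ℝ A) ∧
      (∀ P' : Finset A,
        ((∀ p ∈ P', p * p = p ∧ p ≠ 0) ∧
          (∀ p ∈ P', ∀ q ∈ P', p ≠ q → p * q = 0) ∧
          LinearIndependent ℝ (Subtype.val : {x // x ∈ P'} → A) ∧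
          Submodule.span ℝ (P' : Set A) = ⊤ ∧
          P'.card = Module.finrank ℝ A) → P' = P) ∧
      (∀ u : A, (∀ a : A, u * a = a) → ∑ p ∈ P, p = u) := by
  have hli := idemAux_linInd (A := A)
  have hsp := idemAux_span f hpos
  have hfin : (idemAuxSet A).Finite := hli.setFinite
  have hmem : ∀ p, p ∈ hfin.toFinset ↔ p ∈ idemAuxSet A := fun p => hfin.mem_toFinset
  have hcoe : (hfin.toFinset : Set A) = idemAuxSet A := hfin.coe_toFinset
  have hli' : LinearIndependent ℝ (Subtype.val : {x // x ∈ hfin.toFinset} → A) :=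
    hli.comp (fun x => ⟨x.1, (hmem _).1 x.2⟩) (fun x y h => Subtype.ext (by simpa using h))
  have hcard : hfin.toFinset.card = Module.finrank ℝ A := by
    have h1 := finrank_span_finset_eq_card (R := ℝ) (s := hfin.toFinset) hli'
    rw [hcoe, hsp, finrank_top] at h1
    exact h1.symm
  refine ⟨hfin.toFinset, ⟨?_, ?_, hli', by rw [hcoe, hsp], hcard⟩, ?_, ?_⟩
  · intro p hp
    rw [hmem] at hp
    exact ⟨hp.1, hp.2.1⟩
  · intro p hp q hq
    exact idemAux_orth ((hmem p).1 hp) ((hmem q).1 hq)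
  · rintro P' ⟨h1, h2, _, h4, h5⟩
    refine Finset.eq_of_subset_of_card_le ?_ (by rw [hcard, h5])
    intro p hp
    rw [hmem]
    refine ⟨(h1 p hp).1, (h1 p hp).2, fun a => ?_⟩
    have ha : a ∈ Submodule.span ℝ (P' : Set A) := by rw [h4]; trivial
    induction ha using Submodule.span_induction with
    | mem x hx =>
      by_cases hxp : x = p
      · exact ⟨1, by rw [hxp, (h1 p hp).1, one_smul]⟩
      · exact ⟨0, by rw [h2 x hx p hp hxp, zero_smul]⟩
    | zero => exact ⟨0, by simp⟩
    | add x y _ _ hx hy =>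
      obtain ⟨c, hc⟩ := hx
      obtain ⟨d, hd⟩ := hy
      exact ⟨c + d, by rw [add_mul, hc, hd, add_smul]⟩
    | smul r x _ hx =>
      obtain ⟨c, hc⟩ := hx
      exact ⟨r * c, by rw [smul_mul_assoc, hc, smul_smul]⟩
  · intro u hu
    have key : ∀ a : A, (∑ p ∈ hfin.toFinset, p) * a = a := by
      intro a
      have ha : a ∈ Submodule.span ℝ (idemAuxSet A) := by rw [hsp]; trivial
      induction ha using Submodule.span_induction with
      | mem x hx =>
        rw [Finset.sum_mul, Finset.sum_eq_single x, hx.1]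
        · intro q hq hqx
          exact idemAux_orth ((hmem q).1 hq) hx hqx
        · intro h; exact absurd ((hmem x).2 hx) h
      | zero => simp
      | add x y _ _ hx hy => rw [mul_add, hx, hy]
      | smul r x _ hx => rw [mul_smul_comm, hx]
    have h1 := key u
    rw [mul_comm, hu] at h1
    exact h1
end
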